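/- Let 𝒮₀ be a nonempty decreasing subset of 𝒮. (a) inf_{μ∈𝒞(𝒮₀)} Λ_{δ,𝒮₀}(μ) equals the infimum over pairs (μ,E₀) with E₀∈𝒮₀, μ∈𝒫(V_S) and supp(μ|₁)⊆E₀ of [ Λ₁(μ) + Σ_{z∈∂E₀×{−1,1}} μ(z)·log( (d(z)−k(z)+k(z)·δ)/(d(z)·δ) ) ], where k(z) is computed with respect to E₀. (b) If moreover 𝒮₀≠𝒮, then the infimum in (a) is attained at some pair (μ,E₀) with μ|₁(∂E₀)>0. -/

import Mathlib

open scoped BigOperators Classical ENNReal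
open Filter Topology

noncomputable section
namespace ORRW

/-- Probability measures on a finite type `A`, topologized as a subset of `ℝ^A`. -/
abbrev ProbMeas (A : Type) [Fintype A] : Type :=
  {p : A → ℝ // (∀ a, 0 ≤ p a) ∧ ∑ a, p a = 1}

/-- Relative entropy `R(γ‖ρ)` between two finitely supported "rows", valued in `EReal`,
with `+∞` when absolute continuity fails. -/
def relEnt {A : Type} [Fintype A] (γ ρ : A → ℝ) : EReal :=
  if ∀ a, ρ a = 0 → γ a = 0 then ((∑ a, γ a * Real.log (γ a / ρ a) : ℝ) : EReal)
  else (⊤ : EReal)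

/-- `∫ R(q‖p) dν = Σ_a ν(a) · R(q(a,·)‖p(a,·))`. -/
def relEntInt {A : Type} [Fintype A] (ν : A → ℝ) (q p : A → A → ℝ) : EReal :=
  ∑ a, (ν a : EReal) * relEnt (q a) (p a)

/-- `ν` is an invariant measure of the kernel `q`. -/
def Invariant {A : Type} [Fintype A] (ν : A → ℝ) (q : A → A → ℝ) : Prop :=
  ∀ y, ∑ x, ν x * q x y = ν y

/-- Extended-real logarithm: `⊥` at nonpositive arguments. -/
def elog (x : ℝ) : EReal := if x ≤ 0 then (⊥ : EReal) else ((Real.log x : ℝ) : EReal)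

/-- Empirical measure of a finite trajectory `f : Fin (n+1) → A`. -/
def empMeas {A : Type} [Fintype A] [DecidableEq A] (n : ℕ) (f : Fin (n + 1) → A) :
    ProbMeas A :=
  ⟨fun a => ((Finset.univ.filter (fun i => f i = a)).card : ℝ) / (n + 1),
    fun a => by positivity, by
      have key : ∑ a : A, ((Finset.univ.filter (fun i => f i = a)).card) = n + 1 := by
        have h := Finset.card_eq_sum_card_fiberwise
          (s := (Finset.univ : Finset (Fin (n + 1)))) (t := (Finset.univ : Finset A))
          (f := f) (fun i _ => Finset.mem_univ (f i))
        simpa using h.symm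
      have key' : ∑ a : A, (((Finset.univ.filter (fun i => f i = a)).card : ℝ)) = (n : ℝ) + 1 := by
        have h2 := congrArg (fun m : ℕ => (m : ℝ)) key
        push_cast at h2
        simpa using h2
      rw [← Finset.sum_div, key', div_self (by positivity)]⟩

section Graph

variable {V : Type} [Fintype V] [DecidableEq V]

/-- Weight of an edge given the set `F` of already traversed edges. -/
def gw (δ : ℝ) (F : Finset (Sym2 V)) (e : Sym2 V) : ℝ := if e ∈ F then δ else 1

/-- The transition kernel `p̂_F` on `V`. -/
def phat (G : SimpleGraph V) [DecidableRel G.Adj] (δ : ℝ) (F : Finset (Sym2 V))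
    (x y : V) : ℝ :=
  if G.Adj x y then gw δ F s(x, y) / ∑ z ∈ G.neighborFinset x, gw δ F s(x, z) else 0

/-- Two edges are adjacent iff they share a vertex. -/
def edgeAdj (e e' : Sym2 V) : Prop := ∃ v, v ∈ e ∧ v ∈ e'

/-- `x` is a vertex of the edge set `F`. -/
def memVerts (F : Finset (Sym2 V)) (x : V) : Prop := ∃ e ∈ F, x ∈ e

/-- `𝒯_G`: stochastic matrices on `V` adapted to `G`. -/
def TG (G : SimpleGraph V) : Set (V → V → ℝ) :=
  {q | (∀ x y, 0 ≤ q x y) ∧ (∀ x, ∑ y, q x y = 1) ∧ ∀ x y, q x y ≠ 0 → G.Adj x y}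

/-- `𝒯(F)`: stochastic kernels from the vertex set of `F` to `V`, supported on `F`. -/
def TE (F : Finset (Sym2 V)) : Set (V → V → ℝ) :=
  {q | (∀ x y, 0 ≤ q x y) ∧ (∀ x, memVerts F x → ∑ y, q x y = 1) ∧
    ∀ x y, q x y ≠ 0 → s(x, y) ∈ F}

/-- `ℰ`: admissible increasing sequences of traversed edge sets. -/
def seqE (G : SimpleGraph V) [DecidableRel G.Adj] (v₁ : V) :
    Set (Fin G.edgeFinset.card → Finset (Sym2 V)) :=
  {Es | (∀ k, Es k ⊆ G.edgeFinset) ∧ (∀ k, (Es k).card = (k : ℕ) + 1) ∧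
    (∀ k l : Fin G.edgeFinset.card, (k : ℕ) + 1 = (l : ℕ) → Es k ⊂ Es l) ∧
    (∀ k : Fin G.edgeFinset.card, (k : ℕ) = 0 → ∃ e ∈ Es k, v₁ ∈ e) ∧
    (∀ k l : Fin G.edgeFinset.card, (k : ℕ) + 1 = (l : ℕ) →
      ∀ e ∈ Es l \ Es k, ∃ e' ∈ Es k, edgeAdj e e')}

/-- The rate function `I_δ`. -/
def Ifun (G : SimpleGraph V) [DecidableRel G.Adj] (v₁ : V) (δ : ℝ) (ν : ProbMeas V) : EReal :=
  sInf { c : EReal |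
    ∃ (νs : Fin G.edgeFinset.card → ProbMeas V) (r : Fin G.edgeFinset.card → ℝ)
      (Es : Fin G.edgeFinset.card → Finset (Sym2 V))
      (qs : Fin G.edgeFinset.card → V → V → ℝ),
      Es ∈ seqE G v₁ ∧ (∀ k, 0 ≤ r k) ∧ (∑ k, r k = 1) ∧
      (∀ k x, (νs k).1 x ≠ 0 → memVerts (Es k) x) ∧
      (∀ x, ∑ k, r k * (νs k).1 x = ν.1 x) ∧
      (∀ k, qs k ∈ TE (Es k)) ∧ (∀ k, Invariant (νs k).1 (qs k)) ∧
      c = ∑ k, ((r k : ℝ) : EReal) * relEntInt (νs k).1 (qs k) (phat G δ (Es k)) }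

/-- Edges traversed along a path, given as a list of consecutively visited vertices. -/
def pathEdges : List V → Finset (Sym2 V)
  | [] => ∅
  | [_] => ∅
  | x :: y :: t => insert s(x, y) (pathEdges (y :: t))

/-- Product of one-step ORRW transition probabilities along a trajectory,
the trajectory being listed in reverse chronological order. -/
def stepsProb (G : SimpleGraph V) [DecidableRel G.Adj] (δ : ℝ) : List V → ℝ
  | [] => 1
  | [_] => 1
  | y :: x :: t => phat G δ (pathEdges (x :: t).reverse) x y * stepsProb G δ (x :: t)

/-- The law of `(X_0, …, X_n)` for the `δ`-ORRW started at `v₁`. -/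
def trajProb (G : SimpleGraph V) [DecidableRel G.Adj] (δ : ℝ) (v₁ : V) (n : ℕ)
    (f : Fin (n + 1) → V) : ℝ :=
  if f 0 = v₁ then stepsProb G δ (List.ofFn f).reverse else 0

/-- `P_{v₁}(L_{n+1} ∈ C)`: the probability that the empirical measure of the first
`n+1` positions of the `δ`-ORRW lies in `C`. -/
def probEmp (G : SimpleGraph V) [DecidableRel G.Adj] (δ : ℝ) (v₁ : V) (n : ℕ)
    (C : Set (ProbMeas V)) : ℝ :=
  ∑ f : Fin (n + 1) → V, if empMeas n f ∈ C then trajProb G δ v₁ n f else 0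

/-- The family `𝒮` of edge sets of connected subgraphs having an edge at `v₁`. -/
def scrS (G : SimpleGraph V) [DecidableRel G.Adj] (v₁ : V) : Set (Finset (Sym2 V)) :=
  {F | F ⊆ G.edgeFinset ∧ (∃ e ∈ F, v₁ ∈ e) ∧
    ∀ x y : V, memVerts F x → memVerts F y →
      (SimpleGraph.fromEdgeSet (↑F : Set (Sym2 V))).Reachable x y}

/-- `𝒮₀` is a decreasing subset of `𝒮`. -/
def DecreasingIn (G : SimpleGraph V) [DecidableRel G.Adj] (v₁ : V)
    (S0 : Set (Finset (Sym2 V))) : Prop :=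
  ∀ F₁ F₂, F₁ ∈ scrS G v₁ → F₂ ∈ scrS G v₁ → F₁ ⊆ F₂ → F₂ ∈ S0 → F₁ ∈ S0

/-- `P_{v₁}(T_{𝒮₀} > n)`. -/
def probTgt (G : SimpleGraph V) [DecidableRel G.Adj] (δ : ℝ) (v₁ : V)
    (S0 : Set (Finset (Sym2 V))) (n : ℕ) : ℝ :=
  ∑ f : Fin (n + 1) → V,
    if ∀ k, 1 ≤ k → k ≤ n → pathEdges ((List.ofFn f).take (k + 1)) ∈ S0 then
      trajProb G δ v₁ n f
    else 0

/-- `P_{v₁}(C_E > n)` for the edge cover time `C_E`. -/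
def probCgt (G : SimpleGraph V) [DecidableRel G.Adj] (δ : ℝ) (v₁ : V) (n : ℕ) : ℝ :=
  ∑ f : Fin (n + 1) → V,
    if ¬ G.edgeFinset ⊆ pathEdges (List.ofFn f) then trajProb G δ v₁ n f else 0

/-- `E_{v₁}[exp (α T_{𝒮₀})]`, valued in `ℝ≥0∞`; the stopping time takes values in
`{1, 2, …} ∪ {∞}`. -/
def expT (G : SimpleGraph V) [DecidableRel G.Adj] (δ : ℝ) (v₁ : V)
    (S0 : Set (Finset (Sym2 V))) (α : ℝ) : ℝ≥0∞ :=
  (∑' n : ℕ, ENNReal.ofReal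
      (Real.exp (α * (n + 1)) * (probTgt G δ v₁ S0 n - probTgt G δ v₁ S0 (n + 1)))) +
    (if 0 < α then (⊤ : ℝ≥0∞) else if α = 0 then 1 else 0) *
      ENNReal.ofReal (⨅ n : ℕ, probTgt G δ v₁ S0 n)

/-- `E_{v₁}[exp (α C_E)]`, valued in `ℝ≥0∞`. -/
def expC (G : SimpleGraph V) [DecidableRel G.Adj] (δ : ℝ) (v₁ : V) (α : ℝ) : ℝ≥0∞ :=
  (∑' n : ℕ, ENNReal.ofReal
      (Real.exp (α * (n + 1)) * (probCgt G δ v₁ n - probCgt G δ v₁ (n + 1)))) +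
    (if 0 < α then (⊤ : ℝ≥0∞) else if α = 0 then 1 else 0) *
      ENNReal.ofReal (⨅ n : ℕ, probCgt G δ v₁ n)

/-- The critical exponent `α_c(δ)` attached to a family `𝒮₀` of edge sets. -/
def alphaC (G : SimpleGraph V) [DecidableRel G.Adj] (δ : ℝ)
    (S0 : Set (Finset (Sym2 V))) : EReal :=
  sInf { c : EReal | ∃ (ν : ProbMeas V) (F : Finset (Sym2 V)) (q : V → V → ℝ),
    F ∈ S0 ∧ q ∈ TE F ∧ (∀ x, ν.1 x ≠ 0 → memVerts F x) ∧ Invariant ν.1 q ∧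
    c = relEntInt ν.1 q (phat G δ F) }

/-- `α_c^1(δ)`: the critical exponent for the cover time. -/
def alphaC1 (G : SimpleGraph V) [DecidableRel G.Adj] (v₁ : V) (δ : ℝ) : EReal :=
  alphaC G δ (scrS G v₁ \ {G.edgeFinset})

end Graph

section Lifted

variable {V : Type} [Fintype V] [LinearOrder V]

/-- Smaller endpoint of an unordered pair. -/
def sym2lo (e : Sym2 V) : V := Sym2.lift ⟨fun a b => min a b, fun a b => min_comm a b⟩ e

/-- Larger endpoint of an unordered pair. -/
def sym2hi (e : Sym2 V) : V := Sym2.lift ⟨fun a b => max a b, fun a b => max_comm a b⟩ e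

/-- `V_S = E × {-1, 1}`: vertex set of the lifted directed graph `S`
(`true` plays the role of `+1`). -/
abbrev VSet (G : SimpleGraph V) [DecidableRel G.Adj] : Type :=
  {e : Sym2 V // e ∈ G.edgeFinset} × Bool

/-- Tail `z⁻` of an oriented edge. -/
def zm (G : SimpleGraph V) [DecidableRel G.Adj] (z : VSet G) : V :=
  if z.2 then sym2lo z.1.1 else sym2hi z.1.1

/-- Head `z⁺` of an oriented edge. -/
def zp (G : SimpleGraph V) [DecidableRel G.Adj] (z : VSet G) : V :=
  if z.2 then sym2hi z.1.1 else sym2lo z.1.1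

/-- The kernel `p_F` on the lifted directed graph `S`. -/
def pS (G : SimpleGraph V) [DecidableRel G.Adj] (δ : ℝ) (F : Finset (Sym2 V))
    (z₁ z₂ : VSet G) : ℝ :=
  if zp G z₁ = zm G z₂ then
    gw δ F z₂.1.1 / ∑ w : VSet G, (if zp G z₁ = zm G w then gw δ F w.1.1 else 0)
  else 0

/-- `𝒯_S`: stochastic matrices on `V_S` moving along orientations. -/
def TS (G : SimpleGraph V) [DecidableRel G.Adj] : Set (VSet G → VSet G → ℝ) :=
  {q | (∀ z w, 0 ≤ q z w) ∧ (∀ z, ∑ w, q z w = 1) ∧ ∀ z w, q z w ≠ 0 → zp G z = zm G w}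

/-- `𝒞(𝒮₀)`: probability measures on `V_S` whose first marginal is supported in
some member of `𝒮₀`. -/
def CC (G : SimpleGraph V) [DecidableRel G.Adj] (S0 : Set (Finset (Sym2 V))) :
    Set (ProbMeas (VSet G)) :=
  {μ | ∃ F ∈ S0, ∀ z : VSet G, μ.1 z ≠ 0 → z.1.1 ∈ F}

/-- `Λ_{δ,𝒮₀}`. -/
def Lam (G : SimpleGraph V) [DecidableRel G.Adj] (v₁ : V) (δ : ℝ)
    (S0 : Set (Finset (Sym2 V))) (μ : ProbMeas (VSet G)) : EReal :=
  sInf { c : EReal |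
    ∃ (μs : Fin G.edgeFinset.card → ProbMeas (VSet G)) (r : Fin G.edgeFinset.card → ℝ)
      (Es : Fin G.edgeFinset.card → Finset (Sym2 V))
      (qs : Fin G.edgeFinset.card → VSet G → VSet G → ℝ),
      Es ∈ seqE G v₁ ∧ (∀ k, 0 ≤ r k) ∧ (∀ k, Es k ∉ S0 → r k = 0) ∧ (∑ k, r k = 1) ∧
      (∀ k z, (μs k).1 z ≠ 0 → z.1.1 ∈ Es k) ∧
      (∀ z, ∑ k, r k * (μs k).1 z = μ.1 z) ∧
      (∀ k, qs k ∈ TS G) ∧ (∀ k, Invariant (μs k).1 (qs k)) ∧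
      c = ∑ k, ((r k : ℝ) : EReal) * relEntInt (μs k).1 (qs k) (pS G δ (Es k)) }

/-- `Λ^z_{δ,𝒮₀}`. -/
def LamZ (G : SimpleGraph V) [DecidableRel G.Adj] (v₁ : V) (δ : ℝ)
    (S0 : Set (Finset (Sym2 V))) (z : VSet G) (μ : ProbMeas (VSet G)) : EReal :=
  sInf { c : EReal |
    ∃ (μs : Fin G.edgeFinset.card → ProbMeas (VSet G)) (r : Fin G.edgeFinset.card → ℝ)
      (Es : Fin G.edgeFinset.card → Finset (Sym2 V))
      (qs : Fin G.edgeFinset.card → VSet G → VSet G → ℝ),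
      Es ∈ seqE G v₁ ∧ (∀ k : Fin G.edgeFinset.card, (k : ℕ) = 0 → Es k = {z.1.1}) ∧
      (∀ k, 0 ≤ r k) ∧ (∀ k, Es k ∉ S0 → r k = 0) ∧ (∑ k, r k = 1) ∧
      (∀ k w, (μs k).1 w ≠ 0 → w.1.1 ∈ Es k) ∧
      (∀ w, ∑ k, r k * (μs k).1 w = μ.1 w) ∧
      (∀ k, qs k ∈ TS G) ∧ (∀ k, Invariant (μs k).1 (qs k)) ∧
      c = ∑ k, ((r k : ℝ) : EReal) * relEntInt (μs k).1 (qs k) (pS G δ (Es k)) }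

/-- `Λ₁`: the Donsker–Varadhan functional for the simple random walk on `S`
(whose kernel is `pS` with `δ = 1`). -/
def Lam1 (G : SimpleGraph V) [DecidableRel G.Adj] (μ : ProbMeas (VSet G)) : EReal :=
  sInf { c : EReal | ∃ q ∈ TS G, Invariant μ.1 q ∧ c = relEntInt μ.1 q (pS G 1 ∅) }

/-- Boundary `∂F` of an edge set: edges of `F` adjacent to some edge outside `F`. -/
def bdry (G : SimpleGraph V) [DecidableRel G.Adj] (F : Finset (Sym2 V)) : Finset (Sym2 V) :=
  F.filter fun e => ∃ e' ∈ G.edgeFinset \ F, edgeAdj e e'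

/-- Out-degree `d(z)` of `z` in `S`. -/
def outDeg (G : SimpleGraph V) [DecidableRel G.Adj] (z : VSet G) : ℕ :=
  (Finset.univ.filter (fun w : VSet G => zp G z = zm G w)).card

/-- Number `k(z)` of out-neighbours of `z` lying in `F × {-1, 1}`. -/
def outDegIn (G : SimpleGraph V) [DecidableRel G.Adj] (F : Finset (Sym2 V))
    (z : VSet G) : ℕ :=
  (Finset.univ.filter (fun w : VSet G => zp G z = zm G w ∧ w.1.1 ∈ F)).card

/-- The law of `(Z_0, …, Z_n)` for the lifted `δ`-ORRW conditioned on `Z_0 = z`. -/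
def liftTraj (G : SimpleGraph V) [DecidableRel G.Adj] (δ : ℝ) (z : VSet G) (n : ℕ)
    (g : Fin (n + 1) → VSet G) : ℝ :=
  if g 0 = z then
    ∏ i : Fin n,
      pS G δ ((Finset.Iic i.castSucc).image (fun j => (g j).1.1))
        (g i.castSucc) (g i.succ)
  else 0

/-- The restricted logarithmic Laplace functional `W^{n+1}_{𝒮₀}(z)`. -/
def Wres (G : SimpleGraph V) [DecidableRel G.Adj] (δ : ℝ) (z : VSet G)
    (S0 : Set (Finset (Sym2 V))) (h : ProbMeas (VSet G) → ℝ) (n : ℕ) : EReal :=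
  if 0 < ∑ g : Fin (n + 1) → VSet G,
      (if empMeas n g ∈ CC G S0 then liftTraj G δ z n g else 0) then
    ((-((((n : ℝ) + 1))⁻¹ * Real.log (∑ g : Fin (n + 1) → VSet G,
      if empMeas n g ∈ CC G S0 then
        Real.exp (-((n : ℝ) + 1) * h (empMeas n g)) * liftTraj G δ z n g
      else 0)) : ℝ) : EReal)
  else (⊤ : EReal)

end Lifted

/-!
A kernel together with an invariant measure is the same thing as a stationary flow, i.e. a pair
measure with equal marginals, and in terms of flows all constraints are linear. The weighted
average defining `Λ` is at least its smallest term, and each `F ∈ 𝒮` occurs in some sequence of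
`ℰ`, so `inf Λ` is the minimal entropy, relative to `p_F`, of a flow on the lift of some `F ∈ 𝒮₀`.
On the arcs inside the lift of `F` the kernel `p_F` is proportional to the simple random walk, with
a factor that depends only on the tail `z` and equals `1` unless `z` lies over `∂F`. Replacing one
kernel by the other therefore costs exactly the boundary sum.

The minimum is attained by compactness. Entropy has slope `-∞` in the direction of an arc that a
flow does not use although it visits the tail of the arc, and the lift of `F` is strongly connected,
so a minimising flow charges every lift of an edge of `F`. It charges the boundary in particular,
which is nonempty because `F ≠ E`.
-/

section RelativeEntropy

lemma sub_le_mul_log_div {a b : ℝ} (ha : 0 ≤ a) (hb : 0 ≤ b) (hab : b = 0 → a = 0) :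
    a - b ≤ a * Real.log (a / b) := by
  rcases ha.eq_or_lt with rfl | ha
  · simpa using hb
  · have hb : 0 < b := hb.lt_of_ne' fun h => ha.ne' (hab h)
    calc a - b = a * (1 - (a / b)⁻¹) := by field_simp
      _ ≤ a * Real.log (a / b) := by
        gcongr
        exact Real.one_sub_inv_le_log_of_pos (by positivity)

-- The tangent plane to `(a, b) ↦ a log (a / b)` at any point of slope `a / b = s`.
lemma mul_log_add_sub_le_mul_log_div {a b s : ℝ} (ha : 0 ≤ a) (hb : 0 ≤ b)
    (hab : b = 0 → a = 0) (hs : 0 < s) :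
    a * Real.log s + a - s * b ≤ a * Real.log (a / b) := by
  have htangent : a - s * b ≤ a * Real.log (a / (s * b)) :=
    sub_le_mul_log_div ha (by positivity) fun h => hab ((mul_eq_zero.1 h).resolve_left hs.ne')
  rcases eq_or_ne a 0 with rfl | ha0
  · simpa using htangent
  · have hb0 : b ≠ 0 := fun h => ha0 (hab h)
    rw [mul_comm s b, ← div_div, Real.log_div (div_ne_zero ha0 hb0) hs.ne'] at htangent
    linarith

lemma mul_log_div_convex_comb_le {a b a' b' t u : ℝ} (ha : 0 ≤ a) (hb : 0 ≤ b)
    (hab : b = 0 → a = 0) (ha' : 0 ≤ a') (hb' : 0 ≤ b') (hab' : b' = 0 → a' = 0)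
    (ht : 0 < t) (hu : 0 < u) :
    (t * a + u * a') * Real.log ((t * a + u * a') / (t * b + u * b')) ≤
      t * (a * Real.log (a / b)) + u * (a' * Real.log (a' / b')) := by
  rcases eq_or_ne (t * a + u * a') 0 with h0 | h0
  · obtain ⟨hta, hua'⟩ := (add_eq_zero_iff_of_nonneg (by positivity) (by positivity)).1 h0
    have ha0 : a = 0 := (mul_eq_zero.1 hta).resolve_left ht.ne'
    have ha0' : a' = 0 := (mul_eq_zero.1 hua').resolve_left hu.ne'
    simp [ha0, ha0']
  · have hnum : 0 < t * a + u * a' := lt_of_le_of_ne (by positivity) h0.symm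
    have hden : 0 < t * b + u * b' := by
      refine lt_of_le_of_ne (by positivity) fun h => h0 ?_
      obtain ⟨htb, hub'⟩ := (add_eq_zero_iff_of_nonneg (by positivity) (by positivity)).1 h.symm
      rw [hab ((mul_eq_zero.1 htb).resolve_left ht.ne'),
        hab' ((mul_eq_zero.1 hub').resolve_left hu.ne')]
      ring
    set s := (t * a + u * a') / (t * b + u * b')
    have hs : 0 < s := div_pos hnum hden
    have hslope : s * (t * b + u * b') = t * a + u * a' := div_mul_cancel₀ _ hden.ne'
    calc (t * a + u * a') * Real.log s
        = t * (a * Real.log s + a - s * b) + u * (a' * Real.log s + a' - s * b') := by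
          linear_combination hslope
      _ ≤ t * (a * Real.log (a / b)) + u * (a' * Real.log (a' / b')) := by
          gcongr
          · exact mul_log_add_sub_le_mul_log_div ha hb hab hs
          · exact mul_log_add_sub_le_mul_log_div ha' hb' hab' hs

end RelativeEntropy

section StationaryFlows

variable {A : Type*} [Fintype A]

/-- The mass leaving `z` under a pair measure `ρ`, i.e. its first marginal. -/
def outflow (ρ : A × A → ℝ) (z : A) : ℝ := ∑ w, ρ (z, w)

/-- The mass entering `z` under a pair measure `ρ`, i.e. its second marginal. -/
def inflow (ρ : A × A → ℝ) (z : A) : ℝ := ∑ w, ρ (w, z)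

/-- Probability measures on pairs, carried by the arcs of the digraph `r`, whose two marginals
agree. They encode the pairs of a kernel along `r` and an invariant measure of it, and make the
constraints linear. -/
def stationaryFlows (r : A → A → Prop) : Set (A × A → ℝ) :=
  {ρ | ρ ∈ stdSimplex ℝ (A × A) ∧ inflow ρ = outflow ρ ∧ ∀ z w, ¬ r z w → ρ (z, w) = 0}

/-- The relative entropy of a pair measure `ρ` with respect to the pair measure that has the same
first marginal as `ρ` and transition kernel `P`. -/
def pairEntropy (P : A → A → ℝ) (ρ : A × A → ℝ) : ℝ :=
  ∑ x : A × A, ρ x * Real.log (ρ x / (outflow ρ x.1 * P x.1 x.2))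

variable {P P' : A → A → ℝ} {r : A → A → Prop} {ρ ρ' : A × A → ℝ}

lemma sum_outflow_mul (ρ : A × A → ℝ) (f : A → ℝ) :
    ∑ z, outflow ρ z * f z = ∑ x : A × A, ρ x * f x.1 := by
  simp only [outflow, Finset.sum_mul, Fintype.sum_prod_type]

lemma outflow_nonneg (hρ : 0 ≤ ρ) : 0 ≤ outflow ρ :=
  fun _ => Finset.sum_nonneg fun _ _ => hρ _

lemma le_outflow (hρ : 0 ≤ ρ) (z w : A) : ρ (z, w) ≤ outflow ρ z :=
  Finset.single_le_sum (f := fun w => ρ (z, w)) (fun _ _ => hρ _) (Finset.mem_univ w)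

lemma le_inflow (hρ : 0 ≤ ρ) (z w : A) : ρ (z, w) ≤ inflow ρ w :=
  Finset.single_le_sum (f := fun z => ρ (z, w)) (fun _ _ => hρ _) (Finset.mem_univ z)

lemma eq_zero_of_outflow_eq_zero (hρ : 0 ≤ ρ) {z : A} (hz : outflow ρ z = 0) (w : A) :
    ρ (z, w) = 0 :=
  le_antisymm (hz ▸ le_outflow hρ z w) (hρ _)

lemma outflow_smul_add_smul (t u : ℝ) (ρ ρ' : A × A → ℝ) (z : A) :
    outflow (t • ρ + u • ρ') z = t * outflow ρ z + u * outflow ρ' z := by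
  simp only [outflow, Pi.add_apply, Pi.smul_apply, smul_eq_mul, Finset.sum_add_distrib,
    Finset.mul_sum]

lemma inflow_smul_add_smul (t u : ℝ) (ρ ρ' : A × A → ℝ) (z : A) :
    inflow (t • ρ + u • ρ') z = t * inflow ρ z + u * inflow ρ' z := by
  simp only [inflow, Pi.add_apply, Pi.smul_apply, smul_eq_mul, Finset.sum_add_distrib,
    Finset.mul_sum]

lemma arc_of_ne_zero (hρ : ρ ∈ stationaryFlows r) {z w : A} (h : ρ (z, w) ≠ 0) : r z w :=
  not_not.1 fun hr => h (hρ.2.2 z w hr)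

lemma sum_outflow_of_mem_stationaryFlows (hρ : ρ ∈ stationaryFlows r) :
    ∑ z, outflow ρ z = 1 := by
  simpa only [mul_one, hρ.1.2] using sum_outflow_mul ρ fun _ => 1

lemma exists_arc_of_outflow_ne_zero (hρ : ρ ∈ stationaryFlows r) {z : A}
    (hz : outflow ρ z ≠ 0) : ∃ w, r z w := by
  obtain ⟨w, -, hw⟩ := Finset.exists_ne_zero_of_sum_ne_zero hz
  exact ⟨w, arc_of_ne_zero hρ hw⟩

lemma convex_stationaryFlows (r : A → A → Prop) : Convex ℝ (stationaryFlows r) := by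
  intro ρ hρ ρ' hρ' t u ht hu htu
  refine ⟨convex_stdSimplex ℝ _ hρ.1 hρ'.1 ht hu htu, ?_, fun z w hr => ?_⟩
  · ext z
    rw [inflow_smul_add_smul, outflow_smul_add_smul, hρ.2.1, hρ'.2.1]
  · simp [hρ.2.2 z w hr, hρ'.2.2 z w hr]

lemma continuous_outflow : Continuous (outflow : (A × A → ℝ) → A → ℝ) := by
  unfold outflow
  fun_prop

lemma continuous_inflow : Continuous (inflow : (A × A → ℝ) → A → ℝ) := by
  unfold inflow
  fun_prop

lemma isCompact_stationaryFlows (r : A → A → Prop) : IsCompact (stationaryFlows r) := by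
  refine (isCompact_stdSimplex ℝ (A × A)).inter_right
    (IsClosed.inter (isClosed_eq continuous_inflow continuous_outflow) ?_)
  change IsClosed {ρ : A × A → ℝ | ∀ z w, ¬ r z w → ρ (z, w) = 0}
  simp only [Set.ofPred_forall]
  exact isClosed_iInter fun z => isClosed_iInter fun w => isClosed_iInter fun _ =>
    isClosed_eq (continuous_apply _) continuous_const

lemma pairEntropy_eq_sum_mul_log_sub (hρ : 0 ≤ ρ) (hP : ∀ z w, ρ (z, w) ≠ 0 → P z w ≠ 0) :
    pairEntropy P ρ = ∑ x : A × A, (ρ x * Real.log (ρ x) - ρ x * Real.log (P x.1 x.2)) -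
      ∑ z, outflow ρ z * Real.log (outflow ρ z) := by
  rw [sum_outflow_mul, ← Finset.sum_sub_distrib]
  refine Finset.sum_congr rfl fun x _ => ?_
  rcases eq_or_ne (ρ x) 0 with hx | hx
  · simp [hx]
  · have hout : outflow ρ x.1 ≠ 0 := fun h => hx (eq_zero_of_outflow_eq_zero hρ h x.2)
    have hPx : P x.1 x.2 ≠ 0 := hP _ _ hx
    rw [Real.log_div hx (mul_ne_zero hout hPx), Real.log_mul hout hPx]
    ring

lemma continuousOn_pairEntropy (hP : ∀ z w, r z w → 0 < P z w) :
    ContinuousOn (pairEntropy P) (stationaryFlows r) := by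
  have hcont : Continuous fun ρ : A × A → ℝ =>
      ∑ x : A × A, (ρ x * Real.log (ρ x) - ρ x * Real.log (P x.1 x.2)) -
        ∑ z, outflow ρ z * Real.log (outflow ρ z) := by
    refine .sub (continuous_finsetSum _ fun x _ => .sub ?_ (by fun_prop))
      (continuous_finsetSum _ fun z _ => ?_)
    · exact Real.continuous_mul_log.comp (continuous_apply x)
    · exact Real.continuous_mul_log.comp ((continuous_apply z).comp continuous_outflow)
  refine hcont.continuousOn.congr fun ρ hρ => pairEntropy_eq_sum_mul_log_sub hρ.1.1 ?_
  exact fun z w h => (hP z w (arc_of_ne_zero hρ h)).ne'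

lemma pairEntropy_eq_add_sum_mul_log (hρ : 0 ≤ ρ) {c : A → ℝ}
    (hP : ∀ z w, ρ (z, w) ≠ 0 → P z w ≠ 0)
    (hc : ∀ z w, ρ (z, w) ≠ 0 → c z ≠ 0 ∧ P' z w = c z * P z w) :
    pairEntropy P ρ = pairEntropy P' ρ + ∑ z, outflow ρ z * Real.log (c z) := by
  rw [sum_outflow_mul, pairEntropy, pairEntropy, ← Finset.sum_add_distrib]
  refine Finset.sum_congr rfl fun x _ => ?_
  rcases eq_or_ne (ρ x) 0 with hx | hx
  · simp [hx]
  · have hout : outflow ρ x.1 ≠ 0 := fun h => hx (eq_zero_of_outflow_eq_zero hρ h x.2)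
    have hPx : P x.1 x.2 ≠ 0 := hP _ _ hx
    obtain ⟨hcx, hP'x⟩ := hc _ _ hx
    rw [hP'x, ← mul_add, ← Real.log_mul (by positivity) hcx]
    congr 2
    field_simp

-- Compared with convexity, the arc `(a, b)` that `ρ` does not use yields a gain of order
-- `t log t`.
lemma pairEntropy_convex_comb_le (hP : ∀ z w, r z w → 0 < P z w)
    (hρ : ρ ∈ stationaryFlows r) (hρ' : ρ' ∈ stationaryFlows r) {a b : A}
    (hab : ρ (a, b) = 0) (hab' : 0 < ρ' (a, b)) {t : ℝ} (ht0 : 0 < t) (ht1 : t < 1) :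
    pairEntropy P ((1 - t) • ρ + t • ρ') ≤ (1 - t) * pairEntropy P ρ + t * pairEntropy P ρ' +
      t * (ρ' (a, b) * Real.log
        (t * outflow ρ' a / ((1 - t) * outflow ρ a + t * outflow ρ' a))) := by
  have hout := outflow_nonneg hρ.1.1
  have hout' := outflow_nonneg hρ'.1.1
  have hu : 0 < 1 - t := sub_pos.2 ht1
  rw [← Fintype.sum_ite_eq (a, b) fun _ => t * (ρ' (a, b) * _), pairEntropy, pairEntropy,
    pairEntropy, Finset.mul_sum, Finset.mul_sum, ← Finset.sum_add_distrib,
    ← Finset.sum_add_distrib]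
  refine Finset.sum_le_sum fun ⟨z, w⟩ _ => ?_
  have hmix : ((1 - t) * outflow ρ z + t * outflow ρ' z) * P z w =
      (1 - t) * (outflow ρ z * P z w) + t * (outflow ρ' z * P z w) := by ring
  simp only [Pi.add_apply, Pi.smul_apply, smul_eq_mul, outflow_smul_add_smul]
  split_ifs with hzw
  · obtain ⟨rfl, rfl⟩ := Prod.mk.inj hzw
    have hPab := hP a b (arc_of_ne_zero hρ' hab'.ne')
    have houta' : 0 < outflow ρ' a := hab'.trans_le (le_outflow hρ'.1.1 a b)
    have hden : 0 < (1 - t) * outflow ρ a + t * outflow ρ' a :=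
      add_pos_of_nonneg_of_pos (mul_nonneg hu.le (hout a)) (mul_pos ht0 houta')
    have hsplit : t * ρ' (a, b) / (((1 - t) * outflow ρ a + t * outflow ρ' a) * P a b) =
        ρ' (a, b) / (outflow ρ' a * P a b) *
          (t * outflow ρ' a / ((1 - t) * outflow ρ a + t * outflow ρ' a)) := by
      field_simp
    rw [hab, mul_zero, zero_add, hsplit, Real.log_mul (by positivity) (by positivity)]
    exact le_of_eq (by ring)
  · rw [add_zero, hmix]
    by_cases hr : r z w
    · have hPzw := hP z w hr
      refine mul_log_div_convex_comb_le (hρ.1.1 _) (mul_nonneg (hout z) hPzw.le) (fun h => ?_)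
        (hρ'.1.1 _) (mul_nonneg (hout' z) hPzw.le) (fun h => ?_) hu ht0
      · exact eq_zero_of_outflow_eq_zero hρ.1.1 ((mul_eq_zero.1 h).resolve_right hPzw.ne') w
      · exact eq_zero_of_outflow_eq_zero hρ'.1.1 ((mul_eq_zero.1 h).resolve_right hPzw.ne') w
    · simp [hρ.2.2 z w hr, hρ'.2.2 z w hr]

lemma tendsto_log_mul_div_convex_comb_atBot {s s' : ℝ} (hs : 0 < s) (hs' : 0 < s') :
    Tendsto (fun t => Real.log (t * s' / ((1 - t) * s + t * s'))) (𝓝[>] 0) atBot := by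
  refine Real.tendsto_log_nhdsGT_zero.comp (tendsto_nhdsWithin_iff.2 ⟨?_, ?_⟩)
  · have hcont : ContinuousAt (fun t => t * s' / ((1 - t) * s + t * s')) 0 :=
      ContinuousAt.div (by fun_prop) (by fun_prop) (by simpa using hs.ne')
    simpa using hcont.tendsto.mono_left nhdsWithin_le_nhds
  · filter_upwards [Ioo_mem_nhdsGT one_pos] with t ht
    have := sub_pos.2 ht.2
    have := ht.1
    exact Set.mem_Ioi.2 (by positivity)

lemma pos_of_isMinOn_pairEntropy (hP : ∀ z w, r z w → 0 < P z w)
    (hρ : ρ ∈ stationaryFlows r) (hmin : IsMinOn (pairEntropy P) (stationaryFlows r) ρ)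
    (hρ' : ρ' ∈ stationaryFlows r) {a b : A} (ha : 0 < outflow ρ a) (hab' : 0 < ρ' (a, b)) :
    0 < ρ (a, b) := by
  by_contra hab
  have hab : ρ (a, b) = 0 := le_antisymm (not_lt.1 hab) (hρ.1.1 _)
  have hgain := (tendsto_log_mul_div_convex_comb_atBot ha
    (hab'.trans_le (le_outflow hρ'.1.1 a b))).const_mul_atBot hab'
  obtain ⟨t, hlt, ht0, ht1⟩ :=
    ((hgain.eventually_lt_atBot (pairEntropy P ρ - pairEntropy P ρ')).and
      (Ioo_mem_nhdsGT one_pos)).exists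
  have hle : pairEntropy P ρ ≤ pairEntropy P ((1 - t) • ρ + t • ρ') :=
    hmin (convex_stationaryFlows r hρ hρ' (sub_pos.2 ht1).le ht0.le (sub_add_cancel 1 t))
  have hconv := pairEntropy_convex_comb_le hP hρ hρ' hab hab' ht0 ht1
  have := mul_lt_mul_of_pos_left hlt ht0
  linarith

lemma outflow_pos_of_isMinOn_pairEntropy (hP : ∀ z w, r z w → 0 < P z w)
    (hρ : ρ ∈ stationaryFlows r) (hmin : IsMinOn (pairEntropy P) (stationaryFlows r) ρ)
    (hρ' : ρ' ∈ stationaryFlows r) (hpos : ∀ z w, r z w → 0 < ρ' (z, w)) {a b : A}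
    (ha : 0 < outflow ρ a) (hab : Relation.ReflTransGen r a b) : 0 < outflow ρ b := by
  induction hab with
  | refl => exact ha
  | @tail b c _ hbc hb =>
    have hflow : 0 < ρ (b, c) := pos_of_isMinOn_pairEntropy hP hρ hmin hρ' hb (hpos b c hbc)
    exact hρ.2.1 ▸ hflow.trans_le (le_inflow hρ.1.1 b c)

end StationaryFlows

section KernelsAndFlows

variable {A : Type}

/-- The law of one step `(Z₀, Z₁)` of the chain with initial measure `μ` and kernel `q`. -/
def pairMeasure (μ : A → ℝ) (q : A → A → ℝ) (x : A × A) : ℝ := μ x.1 * q x.1 x.2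

variable [Fintype A] {μ : A → ℝ} {q P : A → A → ℝ} {ρ : A × A → ℝ}

/-- The conditional law of the second coordinate given the first under the pair measure `ρ`,
completed by the kernel `q` at the points that are null for the first marginal. -/
def condKernel (q : A → A → ℝ) (ρ : A × A → ℝ) (z w : A) : ℝ :=
  if outflow ρ z = 0 then q z w else ρ (z, w) / outflow ρ z

lemma outflow_pairMeasure (hq : ∀ z, ∑ w, q z w = 1) : outflow (pairMeasure μ q) = μ := by
  ext z
  simp only [outflow, pairMeasure, ← Finset.mul_sum, hq, mul_one]

lemma inflow_pairMeasure (h : Invariant μ q) : inflow (pairMeasure μ q) = μ :=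
  funext h

lemma sum_pairMeasure (hq : ∀ z, ∑ w, q z w = 1) : ∑ x, pairMeasure μ q x = ∑ z, μ z := by
  simp only [Fintype.sum_prod_type, pairMeasure, ← Finset.mul_sum, hq, mul_one]

lemma pairMeasure_eq_zero_of_invariant (hμ : 0 ≤ μ) (hq : ∀ z w, 0 ≤ q z w)
    (h : Invariant μ q) {w : A} (hw : μ w = 0) (z : A) : pairMeasure μ q (z, w) = 0 := by
  have hnonneg : 0 ≤ pairMeasure μ q := fun x => mul_nonneg (hμ _) (hq _ _)
  have hle := le_inflow hnonneg z w
  rw [inflow_pairMeasure h, hw] at hle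
  exact le_antisymm hle (hnonneg _)

lemma pairMeasure_condKernel (hρ : 0 ≤ ρ) : pairMeasure (outflow ρ) (condKernel q ρ) = ρ := by
  ext ⟨z, w⟩
  by_cases hz : outflow ρ z = 0
  · simp [pairMeasure, hz, eq_zero_of_outflow_eq_zero hρ hz w]
  · simp [pairMeasure, condKernel, hz, mul_div_cancel₀]

lemma condKernel_nonneg (hq : ∀ z w, 0 ≤ q z w) (hρ : 0 ≤ ρ) (z w : A) :
    0 ≤ condKernel q ρ z w := by
  rw [condKernel]
  split_ifs
  · exact hq z w
  · exact div_nonneg (hρ _) (outflow_nonneg hρ z)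

lemma sum_condKernel (hq : ∀ z, ∑ w, q z w = 1) (z : A) : ∑ w, condKernel q ρ z w = 1 := by
  by_cases hz : outflow ρ z = 0
  · simpa only [condKernel, if_pos hz] using hq z
  · simp only [condKernel, if_neg hz, ← Finset.sum_div]
    exact div_self hz

lemma coe_finset_sum {ι : Type*} (s : Finset ι) (f : ι → ℝ) :
    ((∑ i ∈ s, f i : ℝ) : EReal) = ∑ i ∈ s, (f i : EReal) :=
  map_sum (⟨⟨Real.toEReal, EReal.coe_zero⟩, EReal.coe_add⟩ : ℝ →+ EReal) f s

lemma relEntInt_eq_pairEntropy (hq : ∀ z, ∑ w, q z w = 1) (hP : ∀ z w, P z w = 0 → q z w = 0) :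
    relEntInt μ q P = pairEntropy P (pairMeasure μ q) := by
  rw [pairEntropy, outflow_pairMeasure hq, Fintype.sum_prod_type, coe_finset_sum]
  refine Finset.sum_congr rfl fun z _ => ?_
  rw [relEnt, if_pos (hP z), ← EReal.coe_mul, Finset.mul_sum]
  congr 2 with w
  rcases eq_or_ne (μ z) 0 with hz | hz
  · simp [pairMeasure, hz]
  · rw [pairMeasure, mul_div_mul_left _ _ hz, mul_assoc]

end KernelsAndFlows

section EdgeExtension

variable {V : Type} [DecidableEq V] {A B : Finset (Sym2 V)}

/-- `B` arises from the edge set `A` by adding one new edge adjacent to an edge of `A`; this is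
the step relation of the sequences in `ℰ`. -/
def EdgeExtends (A B : Finset (Sym2 V)) : Prop :=
  ∃ e ∉ A, (∃ e' ∈ A, edgeAdj e e') ∧ B = insert e A

lemma EdgeExtends.ssubset (h : EdgeExtends A B) : A ⊂ B := by
  obtain ⟨e, he, -, rfl⟩ := h
  exact Finset.ssubset_insert he

lemma EdgeExtends.card_eq (h : EdgeExtends A B) : B.card = A.card + 1 := by
  obtain ⟨e, he, -, rfl⟩ := h
  exact Finset.card_insert_of_notMem he

lemma EdgeExtends.exists_edgeAdj (h : EdgeExtends A B) {e : Sym2 V} (he : e ∈ B \ A) :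
    ∃ e' ∈ A, edgeAdj e e' := by
  obtain ⟨e₀, -, hadj, rfl⟩ := h
  rw [Finset.mem_sdiff, Finset.mem_insert] at he
  exact he.1.resolve_right he.2 ▸ hadj

end EdgeExtension

section EdgeGrowth

lemma exists_seq_of_forall_exists_succ {α : Type*} {p : ℕ → α → Prop} {R : ℕ → α → α → Prop}
    {a : α} (ha : p 0 a) (hstep : ∀ n a, p n a → ∃ b, p (n + 1) b ∧ R n a b) :
    ∃ f : ℕ → α, f 0 = a ∧ ∀ n, p n (f n) ∧ R n (f n) (f (n + 1)) := by
  have hnext : ∀ n a, ∃ b, p n a → p (n + 1) b ∧ R n a b := fun n a => by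
    by_cases h : p n a
    · obtain ⟨b, hb⟩ := hstep n a h
      exact ⟨b, fun _ => hb⟩
    · exact ⟨a, fun h' => absurd h' h⟩
  choose next hnext using hnext
  let f : ℕ → α := fun n => n.rec a next
  have hf : ∀ n, p n (f n) := fun n => by
    induction n with
    | zero => exact ha
    | succ n ih => exact (hnext n _ ih).1
  exact ⟨f, rfl, fun n => ⟨hf n, (hnext n _ (hf n)).2⟩⟩

variable {V : Type} [Fintype V] {G : SimpleGraph V} [DecidableRel G.Adj] {v₁ : V}
  {A F : Finset (Sym2 V)}

lemma edgeFinset_mem_scrS (hG : G.Connected) (hF : F ∈ scrS G v₁) : G.edgeFinset ∈ scrS G v₁ := by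
  obtain ⟨hsub, ⟨e, he, hv⟩, -⟩ := hF
  refine ⟨subset_rfl, ⟨e, hsub he, hv⟩, fun x y _ _ => ?_⟩
  rw [SimpleGraph.coe_edgeFinset, SimpleGraph.fromEdgeSet_edgeSet]
  exact hG.preconnected x y

lemma exists_edgeAdj_of_ssubset (hF : F ∈ scrS G v₁) (hA : A ⊂ F) (hv : memVerts A v₁) :
    ∃ e ∈ F, e ∉ A ∧ ∃ e' ∈ A, edgeAdj e e' := by
  obtain ⟨e, heF, heA⟩ := Finset.exists_of_ssubset hA
  by_cases hsat : ∀ x ∈ e, ¬ memVerts A x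
  · obtain ⟨e₁, he₁, hv₁⟩ := hv
    obtain ⟨walk⟩ := hF.2.2 v₁ _ ⟨e₁, hA.subset he₁, hv₁⟩ ⟨e, heF, e.out_fst_mem⟩
    obtain ⟨dart, -, ⟨e', he', hfst⟩, hsnd⟩ := walk.exists_boundary_dart {x | memVerts A x}
      ⟨e₁, he₁, hv₁⟩ (hsat _ e.out_fst_mem)
    refine ⟨s(dart.fst, dart.snd), ?_, fun hmem => hsnd ⟨_, hmem, Sym2.mem_mk_right _ _⟩,
      e', he', dart.fst, Sym2.mem_mk_left _ _, hfst⟩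
    exact ((SimpleGraph.fromEdgeSet_adj _).1 dart.adj).1
  · push Not at hsat
    obtain ⟨x, hxe, e', he', hxe'⟩ := hsat
    exact ⟨e, heF, heA, e', he', x, hxe, hxe'⟩

lemma DecreasingIn.edgeFinset_notMem {S0 : Set (Finset (Sym2 V))}
    (hdec : DecreasingIn G v₁ S0) (hS0 : S0 ⊆ scrS G v₁) (hne : S0 ≠ scrS G v₁) :
    G.edgeFinset ∉ S0 := fun hE =>
  hne (hS0.antisymm fun F hF => hdec F _ hF (hS0 hE) hF.1 hE)

variable [DecidableEq V]

lemma exists_edgeExtends (hG : G.Connected) (hF : F ∈ scrS G v₁) (hA : A ⊂ G.edgeFinset)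
    (hv : memVerts A v₁) (hAF : A ⊆ F ∨ F ⊆ A) :
    ∃ B, EdgeExtends A B ∧ B ⊆ G.edgeFinset ∧ (B ⊆ F ∨ F ⊆ B) := by
  by_cases hFA : F ⊆ A
  · obtain ⟨e, heE, heA, hadj⟩ := exists_edgeAdj_of_ssubset (edgeFinset_mem_scrS hG hF) hA hv
    exact ⟨insert e A, ⟨e, heA, hadj, rfl⟩, Finset.insert_subset heE hA.subset,
      .inr (hFA.trans (Finset.subset_insert _ _))⟩
  · have hAF : A ⊆ F := hAF.resolve_right hFA
    obtain ⟨e, heF, heA, hadj⟩ :=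
      exists_edgeAdj_of_ssubset hF (Finset.ssubset_def.2 ⟨hAF, hFA⟩) hv
    exact ⟨insert e A, ⟨e, heA, hadj, rfl⟩, Finset.insert_subset (hF.1 heF) hA.subset,
      .inl (Finset.insert_subset heF hAF)⟩

lemma exists_edgeExtends_chain (hG : G.Connected) (hF : F ∈ scrS G v₁) :
    ∃ f : ℕ → Finset (Sym2 V), memVerts (f 0) v₁ ∧ ∀ n < G.edgeFinset.card,
      (f n ⊆ G.edgeFinset ∧ (f n ⊆ F ∨ F ⊆ f n) ∧ (f n).card = n + 1) ∧
        (n + 1 < G.edgeFinset.card → EdgeExtends (f n) (f (n + 1))) := by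
  obtain ⟨e₁, he₁, hv₁⟩ := hF.2.1
  obtain ⟨f, hf₀, hf⟩ := exists_seq_of_forall_exists_succ
    (p := fun n A => n < G.edgeFinset.card →
      A ⊆ G.edgeFinset ∧ (A ⊆ F ∨ F ⊆ A) ∧ A.card = n + 1 ∧ e₁ ∈ A)
    (R := fun n A B => n + 1 < G.edgeFinset.card → EdgeExtends A B) (a := {e₁})
    (fun _ => by simp [he₁, hF.1 he₁]) fun n A hA => by
      by_cases hn : n + 1 < G.edgeFinset.card
      · obtain ⟨hsub, hcomp, hcard, hmem⟩ := hA (Nat.lt_of_succ_lt hn)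
        have hproper : A ⊂ G.edgeFinset :=
          hsub.ssubset_of_ne fun h => hn.ne (h ▸ hcard).symm
        obtain ⟨B, hext, hsub', hcomp'⟩ := exists_edgeExtends hG hF hproper ⟨e₁, hmem, hv₁⟩ hcomp
        exact ⟨B, fun _ => ⟨hsub', hcomp', by rw [hext.card_eq, hcard],
          hext.ssubset.subset hmem⟩, fun _ => hext⟩
      · exact ⟨A, fun h => absurd h hn, fun h => absurd h hn⟩
  refine ⟨f, ⟨e₁, by simp [hf₀], hv₁⟩, fun n hn => ⟨?_, (hf n).2⟩⟩
  obtain ⟨hsub, hcomp, hcard, -⟩ := (hf n).1 hn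
  exact ⟨hsub, hcomp, hcard⟩

lemma exists_mem_seqE_eq (hG : G.Connected) (hF : F ∈ scrS G v₁) :
    ∃ Es ∈ seqE G v₁, ∃ k, Es k = F := by
  obtain ⟨f, hv, hf⟩ := exists_edgeExtends_chain hG hF
  have hext : ∀ k l : Fin G.edgeFinset.card, (k : ℕ) + 1 = l → EdgeExtends (f k) (f l) :=
    fun k l hkl => hkl ▸ (hf k k.2).2 (hkl ▸ l.2)
  have hpos : 0 < F.card := let ⟨e, he, _⟩ := hF.2.1; Finset.card_pos.2 ⟨e, he⟩
  have hlt : F.card - 1 < G.edgeFinset.card := by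
    have := Finset.card_le_card hF.1
    omega
  refine ⟨fun k => f k, ⟨fun k => (hf k k.2).1.1, fun k => (hf k k.2).1.2.2,
    fun k l hkl => (hext k l hkl).ssubset, fun k hk => ?_,
    fun k l hkl e he => (hext k l hkl).exists_edgeAdj he⟩, ⟨F.card - 1, hlt⟩, ?_⟩
  · obtain ⟨e, he, hve⟩ := hv
    exact ⟨e, by simpa only [hk] using he, hve⟩
  · obtain ⟨-, hcomp, hcard⟩ := (hf _ hlt).1
    rw [Nat.sub_add_cancel hpos] at hcard
    rcases hcomp with h | h
    · exact Finset.eq_of_subset_of_card_le h hcard.ge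
    · exact (Finset.eq_of_subset_of_card_le h hcard.le).symm

end EdgeGrowth

section LiftedGraph

variable {V : Type} [Fintype V] (G : SimpleGraph V) [DecidableRel G.Adj]

/-- Reversal of the orientation of a lifted edge. -/
def rev : VSet G ≃ VSet G := (Equiv.refl _).prodCongr Equiv.boolNot

lemma rev_fst (z : VSet G) : (rev G z).1 = z.1 := rfl

variable [LinearOrder V]

lemma mk_zm_zp (z : VSet G) : s(zm G z, zp G z) = z.1.1 := by
  obtain ⟨⟨⟨x, y⟩, he⟩, σ⟩ := z
  rcases le_total x y with h | h <;> cases σ <;>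
    simp [zm, zp, sym2lo, sym2hi, h, Sym2.eq_swap]

/-- The arcs of the lifted graph `S` between two lifts of edges of `F`. -/
def LiftArc (F : Finset (Sym2 V)) (z w : VSet G) : Prop :=
  zp G z = zm G w ∧ z.1.1 ∈ F ∧ w.1.1 ∈ F

variable {G}

lemma zm_rev (z : VSet G) : zm G (rev G z) = zp G z := by
  obtain ⟨e, σ⟩ := z
  cases σ <;> rfl

lemma zp_rev (z : VSet G) : zp G (rev G z) = zm G z := by
  obtain ⟨e, σ⟩ := z
  cases σ <;> rfl

lemma exists_lift {x y : V} (h : s(x, y) ∈ G.edgeFinset) :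
    ∃ z : VSet G, z.1.1 = s(x, y) ∧ zm G z = x ∧ zp G z = y := by
  rcases Sym2.eq_iff.1 (mk_zm_zp G (⟨s(x, y), h⟩, true)) with ⟨hx, hy⟩ | ⟨hy, hx⟩
  · exact ⟨_, rfl, hx, hy⟩
  · exact ⟨rev G (⟨s(x, y), h⟩, true), rfl, by rw [zm_rev, hx], by rw [zp_rev, hy]⟩

variable {F : Finset (Sym2 V)} {z w : VSet G} {v₁ : V}

lemma liftArc_rev_rev : LiftArc G F (rev G w) (rev G z) ↔ LiftArc G F z w := by
  simp only [LiftArc, zm_rev, zp_rev, rev_fst]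
  tauto

lemma reflTransGen_liftArc (hF : F ∈ scrS G v₁) (hz : z.1.1 ∈ F) (hw : w.1.1 ∈ F) :
    Relation.ReflTransGen (LiftArc G F) z w := by
  have hend : ∀ x, Relation.ReflTransGen (SimpleGraph.fromEdgeSet (F : Set (Sym2 V))).Adj
      (zp G z) x → ∃ u, u.1.1 ∈ F ∧ zp G u = x ∧ Relation.ReflTransGen (LiftArc G F) z u := by
    intro x hx
    induction hx with
    | refl => exact ⟨z, hz, rfl, .refl⟩
    | tail _ hadj ih =>
      obtain ⟨u, hu, rfl, hzu⟩ := ih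
      have hedge := ((SimpleGraph.fromEdgeSet_adj _).1 hadj).1
      obtain ⟨u', hu', hm, hp⟩ := exists_lift (hF.1 hedge)
      have hu'F : u'.1.1 ∈ F := hu' ▸ hedge
      exact ⟨u', hu'F, hp, hzu.tail ⟨hm.symm, hu, hu'F⟩⟩
  have hreach := hF.2.2 (zp G z) (zm G w) ⟨_, hz, mk_zm_zp G z ▸ Sym2.mem_mk_right _ _⟩
    ⟨_, hw, mk_zm_zp G w ▸ Sym2.mem_mk_left _ _⟩
  obtain ⟨u, hu, hp, hzu⟩ := hend _ ((SimpleGraph.reachable_iff_reflTransGen _ _).1 hreach)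
  exact hzu.tail ⟨hp, hu, hw⟩

lemma outDeg_pos (z : VSet G) : 0 < outDeg G z :=
  Finset.card_pos.2 ⟨rev G z, by simp [zm_rev]⟩

lemma outDegIn_pos (hz : z.1.1 ∈ F) : 0 < outDegIn G F z :=
  Finset.card_pos.2 ⟨rev G z, by simpa [zm_rev, rev_fst] using hz⟩

lemma outDegIn_eq_outDeg (hz : z.1.1 ∈ F) (hb : z.1.1 ∉ bdry G F) :
    outDegIn G F z = outDeg G z := by
  refine congrArg Finset.card (Finset.filter_congr fun w _ => and_iff_left_of_imp fun hzw => ?_)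
  by_contra hw
  refine hb (Finset.mem_filter.2 ⟨hz, w.1.1, Finset.mem_sdiff.2 ⟨w.1.2, hw⟩, zp G z, ?_, ?_⟩)
  · exact mk_zm_zp G z ▸ Sym2.mem_mk_right _ _
  · rw [hzw, ← mk_zm_zp G w]
    exact Sym2.mem_mk_left _ _

lemma bdry_nonempty (hG : G.Connected) (hF : F ∈ scrS G v₁) (hne : F ≠ G.edgeFinset) :
    (bdry G F).Nonempty := by
  obtain ⟨e, heE, heF, e', he', v, hv, hv'⟩ :=
    exists_edgeAdj_of_ssubset (edgeFinset_mem_scrS hG hF) (hF.1.ssubset_of_ne hne) hF.2.1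
  exact ⟨e', Finset.mem_filter.2 ⟨he', e, Finset.mem_sdiff.2 ⟨heE, heF⟩, v, hv', hv⟩⟩

end LiftedGraph

section UniformFlow

variable {V : Type} [Fintype V] [LinearOrder V] (G : SimpleGraph V) [DecidableRel G.Adj]

/-- The stationary pair measure of the simple random walk on the lifts of edges of `F`, whose
invariant measure is uniform on these lifts. -/
def uniformFlow (F : Finset (Sym2 V)) (x : VSet G × VSet G) : ℝ :=
  if LiftArc G F x.1 x.2 then
    (outDegIn G F x.1 : ℝ)⁻¹ * ((Finset.univ.filter fun z : VSet G => z.1.1 ∈ F).card : ℝ)⁻¹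
  else 0

variable {G} {F : Finset (Sym2 V)}

lemma outflow_uniformFlow (z : VSet G) : outflow (uniformFlow G F) z =
    if z.1.1 ∈ F then ((Finset.univ.filter fun z : VSet G => z.1.1 ∈ F).card : ℝ)⁻¹ else 0 := by
  by_cases hz : z.1.1 ∈ F
  · have hk : (outDegIn G F z : ℝ) ≠ 0 := Nat.cast_ne_zero.2 (outDegIn_pos hz).ne'
    simp only [outflow, uniformFlow, LiftArc, hz, true_and, if_true, ← Finset.sum_filter,
      Finset.sum_const, nsmul_eq_mul]
    exact mul_inv_cancel_left₀ hk _
  · simp [outflow, uniformFlow, LiftArc, hz]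

lemma uniformFlow_rev_rev (z w : VSet G) :
    uniformFlow G F (rev G w, rev G z) = uniformFlow G F (z, w) := by
  by_cases h : LiftArc G F z w
  · have hk : outDegIn G F (rev G w) = outDegIn G F z := by
      simp only [outDegIn, zp_rev, h.1]
    simp only [uniformFlow, liftArc_rev_rev, hk]
  · simp only [uniformFlow, liftArc_rev_rev, if_neg h]

lemma inflow_uniformFlow : inflow (uniformFlow G F) = outflow (uniformFlow G F) := by
  ext z
  calc inflow (uniformFlow G F) z = ∑ w, uniformFlow G F (rev G z, rev G w) := by
        simp only [inflow, uniformFlow_rev_rev]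
    _ = outflow (uniformFlow G F) (rev G z) :=
        Equiv.sum_comp (rev G) fun w => uniformFlow G F (rev G z, w)
    _ = outflow (uniformFlow G F) z := by
        rw [outflow_uniformFlow, outflow_uniformFlow]
        rfl

lemma card_filter_lift_pos (hF : F ⊆ G.edgeFinset) (hne : F.Nonempty) :
    0 < (Finset.univ.filter fun z : VSet G => z.1.1 ∈ F).card :=
  let ⟨e, he⟩ := hne
  Finset.card_pos.2 ⟨(⟨e, hF he⟩, true), by simpa using he⟩

lemma uniformFlow_mem_stationaryFlows (hF : F ⊆ G.edgeFinset) (hne : F.Nonempty) :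
    uniformFlow G F ∈ stationaryFlows (LiftArc G F) := by
  refine ⟨⟨fun x => ?_, ?_⟩, inflow_uniformFlow, fun z w h => if_neg h⟩
  · rw [uniformFlow]
    positivity
  · have hN := (card_filter_lift_pos hF hne).ne'
    rw [Fintype.sum_prod_type]
    change ∑ z, outflow (uniformFlow G F) z = 1
    simp only [outflow_uniformFlow, ← Finset.sum_filter, Finset.sum_const, nsmul_eq_mul]
    exact mul_inv_cancel₀ (Nat.cast_ne_zero.2 hN)

lemma uniformFlow_pos (hF : F ⊆ G.edgeFinset) {z w : VSet G} (h : LiftArc G F z w) :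
    0 < uniformFlow G F (z, w) := by
  have hk := outDegIn_pos h.2.1
  have hN := card_filter_lift_pos hF ⟨_, h.2.1⟩
  rw [uniformFlow, if_pos h]
  positivity

end UniformFlow

lemma gw_pos {V : Type} [DecidableEq V] {δ : ℝ} (hδ : 0 < δ) (F : Finset (Sym2 V)) (e : Sym2 V) :
    0 < gw δ F e := by
  rw [gw]
  positivity

section BoundaryCost

variable {V : Type} [Fintype V] [LinearOrder V] (G : SimpleGraph V) [DecidableRel G.Adj]

/-- The ratio `(d(z) - k(z) + k(z) δ) / (d(z) δ)` between the probabilities that the simple random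
walk and the kernel `p_F` give to each arc from `z` into `F`. -/
def exitRatio (δ : ℝ) (F : Finset (Sym2 V)) (z : VSet G) : ℝ :=
  ((outDeg G z : ℝ) - (outDegIn G F z : ℝ) + (outDegIn G F z : ℝ) * δ) / ((outDeg G z : ℝ) * δ)

/-- The sum over `∂F × {-1, 1}` in the boundary expression. -/
def boundaryCost (δ : ℝ) (F : Finset (Sym2 V)) (μ : VSet G → ℝ) : ℝ :=
  ∑ z : VSet G, if z.1.1 ∈ bdry G F then μ z * Real.log (exitRatio G δ F z) else 0

variable {G} {δ : ℝ} {F : Finset (Sym2 V)} {z w : VSet G} {ρ : VSet G × VSet G → ℝ}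

lemma sum_gw_eq (δ : ℝ) (F : Finset (Sym2 V)) (z : VSet G) :
    ∑ w : VSet G, (if zp G z = zm G w then gw δ F w.1.1 else 0) =
      (outDeg G z : ℝ) - outDegIn G F z + outDegIn G F z * δ := by
  rw [outDeg, outDegIn, Finset.card_filter, Finset.card_filter]
  push_cast
  rw [← Finset.sum_sub_distrib, Finset.sum_mul, ← Finset.sum_add_distrib]
  refine Finset.sum_congr rfl fun w _ => ?_
  by_cases hzw : zp G z = zm G w <;> by_cases hw : w.1.1 ∈ F <;> simp [gw, hzw, hw]

lemma sum_gw_pos (hδ : 0 < δ) (F : Finset (Sym2 V)) (z : VSet G) :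
    0 < ∑ w : VSet G, (if zp G z = zm G w then gw δ F w.1.1 else 0) := by
  rw [← Finset.sum_filter]
  exact Finset.sum_pos (fun w _ => gw_pos hδ F _) (Finset.card_pos.1 (outDeg_pos z))

lemma pS_pos (hδ : 0 < δ) (F : Finset (Sym2 V)) (h : zp G z = zm G w) : 0 < pS G δ F z w := by
  rw [pS, if_pos h]
  exact div_pos (gw_pos hδ F _) (sum_gw_pos hδ F z)

lemma exitRatio_pos (hδ : 0 < δ) (F : Finset (Sym2 V)) (z : VSet G) : 0 < exitRatio G δ F z := by
  have hd := outDeg_pos z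
  rw [exitRatio, ← sum_gw_eq]
  exact div_pos (sum_gw_pos hδ F z) (by positivity)

lemma exitRatio_eq_one (hδ : 0 < δ) (hz : z.1.1 ∈ F) (hb : z.1.1 ∉ bdry G F) :
    exitRatio G δ F z = 1 := by
  have hd := outDeg_pos z
  rw [exitRatio, outDegIn_eq_outDeg hz hb, sub_self, zero_add]
  exact div_self (by positivity)

lemma pS_one_eq_exitRatio_mul (hδ : 0 < δ) (h : LiftArc G F z w) :
    pS G 1 ∅ z w = exitRatio G δ F z * pS G δ F z w := by
  have hd := outDeg_pos z
  have hsum : (outDeg G z : ℝ) - outDegIn G F z + outDegIn G F z * δ ≠ 0 :=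
    sum_gw_eq δ F z ▸ (sum_gw_pos hδ F z).ne'
  rw [pS, if_pos h.1, pS, if_pos h.1, sum_gw_eq, sum_gw_eq, exitRatio]
  simp only [gw, h.2.2, if_true, Finset.notMem_empty, if_false, mul_one, sub_add_cancel]
  field_simp

lemma pairEntropy_pS_eq_add_boundaryCost (hδ : 0 < δ) (hρ : ρ ∈ stationaryFlows (LiftArc G F)) :
    pairEntropy (pS G δ F) ρ = pairEntropy (pS G 1 ∅) ρ + boundaryCost G δ F (outflow ρ) := by
  have hratio : ∀ z w, ρ (z, w) ≠ 0 →
      exitRatio G δ F z ≠ 0 ∧ pS G 1 ∅ z w = exitRatio G δ F z * pS G δ F z w := fun z w h =>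
    ⟨(exitRatio_pos hδ F z).ne', pS_one_eq_exitRatio_mul hδ (arc_of_ne_zero hρ h)⟩
  rw [pairEntropy_eq_add_sum_mul_log hρ.1.1
    (fun z w h => (pS_pos hδ F (arc_of_ne_zero hρ h).1).ne') hratio, boundaryCost]
  congr 1
  refine Finset.sum_congr rfl fun z _ => ?_
  split_ifs with hb
  · rfl
  · rcases eq_or_ne (outflow ρ z) 0 with hz | hz
    · rw [hz, zero_mul]
    · obtain ⟨w, hzw⟩ := exists_arc_of_outflow_ne_zero hρ hz
      rw [exitRatio_eq_one hδ hzw.2.1 hb, Real.log_one, mul_zero]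

end BoundaryCost

section LiftedKernels

variable {V : Type} [Fintype V] [LinearOrder V] {G : SimpleGraph V} [DecidableRel G.Adj]
  {δ : ℝ} {F : Finset (Sym2 V)} {μ : VSet G → ℝ} {q : VSet G → VSet G → ℝ}
  {ρ : VSet G × VSet G → ℝ}

lemma relEntInt_pS_eq_pairEntropy (hδ : 0 < δ) (hq : q ∈ TS G) :
    relEntInt μ q (pS G δ F) = pairEntropy (pS G δ F) (pairMeasure μ q) :=
  relEntInt_eq_pairEntropy hq.2.1 fun z w h =>
    not_not.1 fun hzw => (pS_pos hδ F (hq.2.2 z w hzw)).ne' h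

lemma pairMeasure_mem_stationaryFlows_liftArc (μ : ProbMeas (VSet G)) (hq : q ∈ TS G)
    (hinv : Invariant μ.1 q) (hsupp : ∀ z, μ.1 z ≠ 0 → z.1.1 ∈ F) :
    pairMeasure μ.1 q ∈ stationaryFlows (LiftArc G F) := by
  refine ⟨⟨fun x => mul_nonneg (μ.2.1 _) (hq.1 _ _), (sum_pairMeasure hq.2.1).trans μ.2.2⟩,
    (inflow_pairMeasure hinv).trans (outflow_pairMeasure hq.2.1).symm, fun z w => ?_⟩
  contrapose!
  intro h
  exact ⟨hq.2.2 z w (right_ne_zero_of_mul h), hsupp z (left_ne_zero_of_mul h),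
    hsupp w fun hw => h (pairMeasure_eq_zero_of_invariant μ.2.1 hq.1 hinv hw z)⟩

lemma reversal_kernel_mem_TS : (fun z w => if w = rev G z then 1 else 0) ∈ TS G := by
  refine ⟨fun z w => by positivity, fun z => by simp, fun z w h => ?_⟩
  rw [ite_ne_right_iff] at h
  rw [h.1, zm_rev]

lemma condKernel_mem_TS (hq : q ∈ TS G) (hρ : ρ ∈ stationaryFlows (LiftArc G F)) :
    condKernel q ρ ∈ TS G := by
  refine ⟨condKernel_nonneg hq.1 hρ.1.1, sum_condKernel hq.2.1, fun z w h => ?_⟩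
  by_cases hz : outflow ρ z = 0
  · exact hq.2.2 z w (by rwa [condKernel, if_pos hz] at h)
  · rw [condKernel, if_neg hz] at h
    exact (arc_of_ne_zero hρ (div_ne_zero_iff.1 h).1).1

lemma exists_kernel_of_mem_stationaryFlows (hρ : ρ ∈ stationaryFlows (LiftArc G F)) :
    ∃ μ : ProbMeas (VSet G), ∃ q ∈ TS G, Invariant μ.1 q ∧ (∀ z, μ.1 z ≠ 0 → z.1.1 ∈ F) ∧
      μ.1 = outflow ρ ∧ pairMeasure μ.1 q = ρ := by
  refine ⟨⟨outflow ρ, outflow_nonneg hρ.1.1, sum_outflow_of_mem_stationaryFlows hρ⟩, _,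
    condKernel_mem_TS reversal_kernel_mem_TS hρ, fun z => ?_, fun z hz => ?_, rfl,
    pairMeasure_condKernel hρ.1.1⟩
  · calc inflow (pairMeasure (outflow ρ) (condKernel _ ρ)) z
        = inflow ρ z := by rw [pairMeasure_condKernel hρ.1.1]
      _ = outflow ρ z := congrFun hρ.2.1 z
  · obtain ⟨w, hzw⟩ := exists_arc_of_outflow_ne_zero hρ hz
    exact hzw.2.1

end LiftedKernels

lemma exists_pos_and_le_sum_mul {ι : Type*} [Fintype ι] {r x : ι → ℝ} (hr : 0 ≤ r)
    (hsum : ∑ k, r k = 1) : ∃ k, 0 < r k ∧ x k ≤ ∑ l, r l * x l := by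
  by_contra! hlt
  have hle : ∀ k, r k * ∑ l, r l * x l ≤ r k * x k := fun k => by
    rcases (hr k).eq_or_lt with hk | hk
    · simp only [← hk, Pi.zero_apply, zero_mul, le_refl]
    · exact mul_le_mul_of_nonneg_left (hlt k hk).le hk.le
  obtain ⟨k, -, hk⟩ : ∃ k ∈ Finset.univ, 0 < r k :=
    (Finset.sum_pos_iff_of_nonneg fun k _ => hr k).1 (hsum ▸ one_pos)
  refine (Finset.sum_lt_sum (fun k _ => hle k) ⟨k, Finset.mem_univ k, ?_⟩).ne ?_
  · exact mul_lt_mul_of_pos_left (hlt k hk) hk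
  · rw [← Finset.sum_mul, hsum, one_mul]

section FlowRate

variable {V : Type} [Fintype V] [LinearOrder V] (G : SimpleGraph V) [DecidableRel G.Adj]

/-- The least entropy, relative to `p_F`, of a stationary flow on the lift of a member `F` of
`𝒮₀`. It is the common value of both sides of the boundary expression. -/
def flowRate (δ : ℝ) (S0 : Set (Finset (Sym2 V))) : EReal :=
  ⨅ F ∈ S0, ⨅ ρ ∈ stationaryFlows (LiftArc G F), (pairEntropy (pS G δ F) ρ : EReal)

variable {G} {δ : ℝ} {S0 : Set (Finset (Sym2 V))} {F : Finset (Sym2 V)} {v₁ : V}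
  {μ : ProbMeas (VSet G)} {q : VSet G → VSet G → ℝ} {ρ : VSet G × VSet G → ℝ}

lemma flowRate_le_pairEntropy (hF : F ∈ S0) (hρ : ρ ∈ stationaryFlows (LiftArc G F)) :
    flowRate G δ S0 ≤ pairEntropy (pS G δ F) ρ :=
  (iInf₂_le F hF).trans (iInf₂_le ρ hρ)

lemma flowRate_le_Lam (hδ : 0 < δ) (μ : ProbMeas (VSet G)) :
    flowRate G δ S0 ≤ Lam G v₁ δ S0 μ := by
  refine le_sInf ?_
  rintro _ ⟨μs, r, Es, qs, -, hr, hrS0, hsum, hsupp, -, hqs, hinv, rfl⟩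
  obtain ⟨k, hrk, hk⟩ := exists_pos_and_le_sum_mul
    (x := fun k => pairEntropy (pS G δ (Es k)) (pairMeasure (μs k).1 (qs k))) hr hsum
  have hEk : Es k ∈ S0 := not_not.1 fun h => hrk.ne' (hrS0 k h)
  calc flowRate G δ S0 ≤ pairEntropy (pS G δ (Es k)) (pairMeasure (μs k).1 (qs k)) :=
        flowRate_le_pairEntropy hEk
          (pairMeasure_mem_stationaryFlows_liftArc _ (hqs k) (hinv k) (hsupp k))
    _ ≤ (∑ k, r k * pairEntropy (pS G δ (Es k)) (pairMeasure (μs k).1 (qs k)) : ℝ) :=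
        EReal.coe_le_coe_iff.2 hk
    _ = ∑ k, (r k : EReal) * relEntInt (μs k).1 (qs k) (pS G δ (Es k)) := by
        simp only [coe_finset_sum, EReal.coe_mul, relEntInt_pS_eq_pairEntropy hδ (hqs _)]

lemma Lam_le_relEntInt (hG : G.Connected) (hF : F ∈ scrS G v₁) (hFS0 : F ∈ S0) (hq : q ∈ TS G)
    (hinv : Invariant μ.1 q) (hsupp : ∀ z, μ.1 z ≠ 0 → z.1.1 ∈ F) :
    Lam G v₁ δ S0 μ ≤ relEntInt μ.1 q (pS G δ F) := by
  obtain ⟨Es, hEs, k, rfl⟩ := exists_mem_seqE_eq hG hF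
  have hne : ∀ j, (Es j).Nonempty := fun j => Finset.card_pos.1 (hEs.2.1 j ▸ Nat.succ_pos _)
  choose μ' q' hq' hinv' hsupp' _ using fun j =>
    exists_kernel_of_mem_stationaryFlows (uniformFlow_mem_stationaryFlows (hEs.1 j) (hne j))
  let x := Function.update (fun j => (μ' j, q' j)) k (μ, q)
  have hx : ∀ j, (x j).2 ∈ TS G ∧ Invariant (x j).1.1 (x j).2 ∧
      ∀ z, (x j).1.1 z ≠ 0 → z.1.1 ∈ Es j :=
    (Function.forall_update_iff _ fun j (y : ProbMeas (VSet G) × (VSet G → VSet G → ℝ)) =>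
      y.2 ∈ TS G ∧ Invariant y.1.1 y.2 ∧ ∀ z, y.1.1 z ≠ 0 → z.1.1 ∈ Es j).2
        ⟨⟨hq, hinv, hsupp⟩, fun j _ => ⟨hq' j, hinv' j, hsupp' j⟩⟩
  have hxk : x k = (μ, q) := Function.update_self ..
  have hnonneg : (0 : Fin G.edgeFinset.card → ℝ) ≤ Pi.single k 1 :=
    Pi.single_nonneg.2 zero_le_one
  refine sInf_le ⟨fun j => (x j).1, Pi.single k 1, Es, fun j => (x j).2, hEs, hnonneg,
    fun j hj => Pi.single_eq_of_ne (by rintro rfl; exact hj hFS0) _,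
    (Finset.sum_pi_single' k 1 _).trans (if_pos (Finset.mem_univ k)), fun j => (hx j).2.2,
    fun z => ?_, fun j => (hx j).1, fun j => (hx j).2.1, ?_⟩
  · rw [Fintype.sum_eq_single k fun j hj => by rw [Pi.single_eq_of_ne hj, zero_mul]]
    simp only [Pi.single_eq_same, one_mul, hxk]
  · rw [Fintype.sum_eq_single k fun j hj => by
      rw [Pi.single_eq_of_ne hj, EReal.coe_zero, zero_mul]]
    simp only [Pi.single_eq_same, EReal.coe_one, one_mul, hxk]

lemma sInf_Lam_eq_flowRate (hG : G.Connected) (hδ : 0 < δ) (hS0 : S0 ⊆ scrS G v₁) :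
    sInf (Lam G v₁ δ S0 '' CC G S0) = flowRate G δ S0 := by
  refine le_antisymm (le_iInf₂ fun F hF => le_iInf₂ fun ρ hρ => ?_) (le_sInf ?_)
  · obtain ⟨μ, q, hq, hinv, hsupp, -, rfl⟩ := exists_kernel_of_mem_stationaryFlows hρ
    rw [← relEntInt_pS_eq_pairEntropy hδ hq]
    exact sInf_le_of_le ⟨μ, ⟨F, hF, hsupp⟩, rfl⟩
      (Lam_le_relEntInt hG (hS0 hF) hF hq hinv hsupp)
  · rintro _ ⟨μ, -, rfl⟩
    exact flowRate_le_Lam hδ μ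

lemma relEntInt_pS_eq_add_boundaryCost (hδ : 0 < δ) (hq : q ∈ TS G) (hinv : Invariant μ.1 q)
    (hsupp : ∀ z, μ.1 z ≠ 0 → z.1.1 ∈ F) :
    relEntInt μ.1 q (pS G δ F) = relEntInt μ.1 q (pS G 1 ∅) + boundaryCost G δ F μ.1 := by
  rw [relEntInt_pS_eq_pairEntropy hδ hq, relEntInt_pS_eq_pairEntropy one_pos hq,
    pairEntropy_pS_eq_add_boundaryCost hδ
      (pairMeasure_mem_stationaryFlows_liftArc μ hq hinv hsupp),
    outflow_pairMeasure hq.2.1, EReal.coe_add]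

lemma flowRate_le_Lam1_add_boundaryCost (hδ : 0 < δ) (hF : F ∈ S0)
    (hsupp : ∀ z, μ.1 z ≠ 0 → z.1.1 ∈ F) :
    flowRate G δ S0 ≤ Lam1 G μ + boundaryCost G δ F μ.1 := by
  rw [← EReal.sub_le_iff_le_add (.inl (EReal.coe_ne_bot _)) (.inl (EReal.coe_ne_top _))]
  refine le_sInf ?_
  rintro _ ⟨q, hq, hinv, rfl⟩
  rw [EReal.sub_le_iff_le_add (.inl (EReal.coe_ne_bot _)) (.inl (EReal.coe_ne_top _)),
    ← relEntInt_pS_eq_add_boundaryCost hδ hq hinv hsupp, relEntInt_pS_eq_pairEntropy hδ hq]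
  exact flowRate_le_pairEntropy hF (pairMeasure_mem_stationaryFlows_liftArc μ hq hinv hsupp)

lemma exists_Lam1_add_boundaryCost_le (hδ : 0 < δ) (hρ : ρ ∈ stationaryFlows (LiftArc G F)) :
    ∃ μ : ProbMeas (VSet G), (∀ z, μ.1 z ≠ 0 → z.1.1 ∈ F) ∧ μ.1 = outflow ρ ∧
      Lam1 G μ + boundaryCost G δ F μ.1 ≤ pairEntropy (pS G δ F) ρ := by
  obtain ⟨μ, q, hq, hinv, hsupp, hμ, rfl⟩ := exists_kernel_of_mem_stationaryFlows hρ
  refine ⟨μ, hsupp, hμ, ?_⟩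
  rw [← relEntInt_pS_eq_pairEntropy hδ hq, relEntInt_pS_eq_add_boundaryCost hδ hq hinv hsupp]
  gcongr
  exact sInf_le ⟨q, hq, hinv, rfl⟩

lemma sInf_Lam1_add_boundaryCost_eq_flowRate (hδ : 0 < δ) :
    sInf {c : EReal | ∃ (μ : ProbMeas (VSet G)) (F : Finset (Sym2 V)), F ∈ S0 ∧
      (∀ z : VSet G, μ.1 z ≠ 0 → z.1.1 ∈ F) ∧ c = Lam1 G μ + boundaryCost G δ F μ.1} =
      flowRate G δ S0 := by
  refine le_antisymm (le_iInf₂ fun F hF => le_iInf₂ fun ρ hρ => ?_) (le_sInf ?_)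
  · obtain ⟨μ, hsupp, -, hle⟩ := exists_Lam1_add_boundaryCost_le hδ hρ
    exact sInf_le_of_le ⟨μ, F, hF, hsupp, rfl⟩ hle
  · rintro _ ⟨μ, F, hF, hsupp, rfl⟩
    exact flowRate_le_Lam1_add_boundaryCost hδ hF hsupp

lemma exists_isMinOn_pairEntropy_pS (hδ : 0 < δ) (hF : F ∈ scrS G v₁) :
    ∃ ρ ∈ stationaryFlows (LiftArc G F),
      IsMinOn (pairEntropy (pS G δ F)) (stationaryFlows (LiftArc G F)) ρ :=
  let ⟨e, he, _⟩ := hF.2.1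
  (isCompact_stationaryFlows _).exists_isMinOn ⟨_, uniformFlow_mem_stationaryFlows hF.1 ⟨e, he⟩⟩
    (continuousOn_pairEntropy fun _ _ h => pS_pos hδ F h.1)

lemma exists_isMinOn_and_flowRate_eq (hδ : 0 < δ) (hne : S0.Nonempty) (hS0 : S0 ⊆ scrS G v₁) :
    ∃ F ∈ S0, ∃ ρ ∈ stationaryFlows (LiftArc G F),
      IsMinOn (pairEntropy (pS G δ F)) (stationaryFlows (LiftArc G F)) ρ ∧
        flowRate G δ S0 = pairEntropy (pS G δ F) ρ := by
  choose! ρ hρ hmin using fun F (hF : F ∈ S0) => exists_isMinOn_pairEntropy_pS hδ (hS0 hF)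
  obtain ⟨F, hF, hle⟩ :=
    Set.exists_min_image S0 (fun F => pairEntropy (pS G δ F) (ρ F)) S0.toFinite hne
  refine ⟨F, hF, ρ F, hρ F hF, hmin F hF, (flowRate_le_pairEntropy hF (hρ F hF)).antisymm ?_⟩
  exact le_iInf₂ fun F' hF' => le_iInf₂ fun ρ' hρ' =>
    EReal.coe_le_coe_iff.2 ((hle F' hF').trans (hmin F' hF' hρ'))

lemma outflow_pos_of_isMinOn_pairEntropy_pS (hδ : 0 < δ) (hF : F ∈ scrS G v₁)
    (hρ : ρ ∈ stationaryFlows (LiftArc G F))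
    (hmin : IsMinOn (pairEntropy (pS G δ F)) (stationaryFlows (LiftArc G F)) ρ) {w : VSet G}
    (hw : w.1.1 ∈ F) : 0 < outflow ρ w := by
  obtain ⟨z, -, hz⟩ : ∃ z ∈ Finset.univ, 0 < outflow ρ z :=
    (Finset.sum_pos_iff_of_nonneg fun z _ => outflow_nonneg hρ.1.1 z).1
      (sum_outflow_of_mem_stationaryFlows hρ ▸ one_pos)
  obtain ⟨_, hzF⟩ := exists_arc_of_outflow_ne_zero hρ hz.ne'
  exact outflow_pos_of_isMinOn_pairEntropy (fun _ _ h => pS_pos hδ F h.1) hρ hmin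
    (uniformFlow_mem_stationaryFlows hF.1 ⟨_, hw⟩) (fun _ _ h => uniformFlow_pos hF.1 h) hz
    (reflTransGen_liftArc hF hzF.2.1 hw)

lemma sum_bdry_outflow_pos (hG : G.Connected) (hδ : 0 < δ) (hF : F ∈ scrS G v₁)
    (hne : F ≠ G.edgeFinset) (hρ : ρ ∈ stationaryFlows (LiftArc G F))
    (hmin : IsMinOn (pairEntropy (pS G δ F)) (stationaryFlows (LiftArc G F)) ρ) :
    0 < ∑ z : VSet G, if z.1.1 ∈ bdry G F then outflow ρ z else 0 := by
  obtain ⟨e, he⟩ := bdry_nonempty hG hF hne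
  have heF : e ∈ F := (Finset.mem_filter.1 he).1
  rw [← Finset.sum_filter]
  refine Finset.sum_pos (fun z hz => outflow_pos_of_isMinOn_pairEntropy_pS hδ hF hρ hmin ?_)
    ⟨(⟨e, hF.1 heF⟩, true), by simpa using he⟩
  exact (Finset.mem_filter.1 (Finset.mem_filter.1 hz).2).1

end FlowRate

/-- Boundary expression for `inf_{μ ∈ 𝒞(𝒮₀)} Λ_{δ,𝒮₀}(μ)`, with
attainment at a measure charging the boundary when `𝒮₀ ≠ 𝒮`. -/
theorem orrw_alpha_boundary_expression {V : Type} [Fintype V] [LinearOrder V]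
    (G : SimpleGraph V) [DecidableRel G.Adj] (hG : G.Connected)
    (hV : 3 ≤ Fintype.card V) (v₁ : V) (δ : ℝ) (hδ : 0 < δ)
    (S0 : Set (Finset (Sym2 V))) (hS0ne : S0.Nonempty) (hS0sub : S0 ⊆ scrS G v₁)
    (hS0dec : DecreasingIn G v₁ S0) :
    sInf (Lam G v₁ δ S0 '' CC G S0) =
      sInf { c : EReal |
        ∃ (μ : ProbMeas (VSet G)) (F : Finset (Sym2 V)),
          F ∈ S0 ∧ (∀ z : VSet G, μ.1 z ≠ 0 → z.1.1 ∈ F) ∧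
          c = Lam1 G μ + ((∑ z : VSet G,
            if z.1.1 ∈ bdry G F then
              μ.1 z * Real.log
                (((outDeg G z : ℝ) - (outDegIn G F z : ℝ) + (outDegIn G F z : ℝ) * δ) /
                  ((outDeg G z : ℝ) * δ))
            else 0 : ℝ) : EReal) } ∧
    (S0 ≠ scrS G v₁ →
      ∃ (μ : ProbMeas (VSet G)) (F : Finset (Sym2 V)),
        F ∈ S0 ∧ (∀ z : VSet G, μ.1 z ≠ 0 → z.1.1 ∈ F) ∧
        (0 : ℝ) < (∑ z : VSet G, if z.1.1 ∈ bdry G F then μ.1 z else 0) ∧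
        sInf (Lam G v₁ δ S0 '' CC G S0) =
          Lam1 G μ + ((∑ z : VSet G,
            if z.1.1 ∈ bdry G F then
              μ.1 z * Real.log
                (((outDeg G z : ℝ) - (outDegIn G F z : ℝ) + (outDegIn G F z : ℝ) * δ) /
                  ((outDeg G z : ℝ) * δ))
            else 0 : ℝ) : EReal)) := by
  refine ⟨(sInf_Lam_eq_flowRate hG hδ hS0sub).trans
    (sInf_Lam1_add_boundaryCost_eq_flowRate hδ).symm, fun hne => ?_⟩
  obtain ⟨F, hF, ρ, hρ, hmin, hrate⟩ := exists_isMinOn_and_flowRate_eq hδ hS0ne hS0sub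
  obtain ⟨μ, hsupp, hμ, hle⟩ := exists_Lam1_add_boundaryCost_le hδ hρ
  have hFE : F ≠ G.edgeFinset := fun h => hS0dec.edgeFinset_notMem hS0sub hne (h ▸ hF)
  refine ⟨μ, F, hF, hsupp, ?_, (sInf_Lam_eq_flowRate hG hδ hS0sub).trans (le_antisymm ?_ ?_)⟩
  · rw [hμ]
    exact sum_bdry_outflow_pos hG hδ (hS0sub hF) hFE hρ hmin
  · exact flowRate_le_Lam1_add_boundaryCost hδ hF hsupp
  · rw [hrate]
    exact hle

end ORRW
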